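/- arXiv:1903.00868 — 2 statements merged into one kernel-verified Lean document; each statement's English description precedes it below -/
import Mathlib

section
/- Extended discrete orthogonality (Remark 3.4): if λ ∈ Λ^{(m+1,n)} has λ_1 = m+1, then P_λ(x_λ̂^{(m,n)}) = 0 for every λ̂ ∈ Λ^{(m,n)}; consequently, for every λ ∈ Λ^{(m+1,n)} and μ ∈ Λ^{(m,n)}, Σ_{λ̂ ∈ Λ^{(m,n)}} P_λ(x_λ̂^{(m,n)}) P_μ(x_λ̂^{(m,n)}) W_λ̂ equals 1 if μ = λ and 0 if μ ≠ λ. -/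
open MeasureTheory Real Finset

noncomputable section

/-- Vandermonde product `∏_{j<k} (x_j - x_k)`. -/
def vand (n : ℕ) (x : Fin n → ℝ) : ℝ :=
  ∏ j : Fin n, ∏ k ∈ Finset.univ.filter (fun k => j < k), (x j - x k)

/-- The determinant `det [p_{λ_j + n - j}(x_k)]_{1 ≤ j,k ≤ n}`. -/
def schurDet (n : ℕ) (p : ℕ → Polynomial ℝ) (lam : Fin n → ℕ) (x : Fin n → ℝ) : ℝ :=
  Matrix.det (Matrix.of fun j k : Fin n => (p (lam j + (n - 1 - (j : ℕ)))).eval (x k))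

/-- The fundamental alcove `Λ^{(m,n)}` : decreasing sequences with entries ≤ m. -/
def Lam (m n : ℕ) : Finset (Fin n → ℕ) :=
  (Fintype.piFinset fun _ => Finset.range (m + 1)).filter
    fun lam => ∀ i j : Fin n, i ≤ j → lam j ≤ lam i

/-- The node `x^{(m,n)}_λ̂` with `j`-th component `x^{(m+n)}_{λ̂_j + n - j}`. -/
def node (n : ℕ) (xr : ℕ → ℝ) (lh : Fin n → ℕ) : Fin n → ℝ :=
  fun j => xr (lh j + (n - 1 - (j : ℕ)))

/-- Christoffel weight `(∑_{k=0}^{N-1} p_k(x_ℓ)²)⁻¹`. -/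
def chrW (p : ℕ → Polynomial ℝ) (N : ℕ) (xr : ℕ → ℝ) (l : ℕ) : ℝ :=
  (∑ k ∈ Finset.range N, ((p k).eval (xr l)) ^ 2)⁻¹



lemma strictAnti_range_eq {n : ℕ} {f g : Fin n → ℕ} (hf : StrictAnti f) (hg : StrictAnti g)
    (h : Set.range f = Set.range g) : f = g := by
  have h1 : StrictMono (f ∘ Fin.rev) := hf.comp Fin.rev_strictAnti
  have h2 : StrictMono (g ∘ Fin.rev) := hg.comp Fin.rev_strictAnti
  have h3 : Set.range (f ∘ Fin.rev) = Set.range (g ∘ Fin.rev) := by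
    rw [Fin.rev_surjective.range_comp, Fin.rev_surjective.range_comp, h]
  have h4 : f ∘ Fin.rev = g ∘ Fin.rev := (StrictMono.range_inj h1 h2).1 h3
  funext i
  have := congrFun h4 (Fin.rev i)
  simpa using this

open Classical in
def SA (N n : ℕ) : Finset (Fin n → ℕ) :=
  (Fintype.piFinset fun _ => Finset.range N).filter StrictAnti

lemma mem_SA {N n : ℕ} {f : Fin n → ℕ} : f ∈ SA N n ↔ (∀ i, f i < N) ∧ StrictAnti f := by
  simp [SA, Fintype.mem_piFinset]

lemma cauchy_binet (N n : ℕ) (A B : Fin n → ℕ → ℝ) :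
    Matrix.det (Matrix.of fun i j : Fin n => ∑ l ∈ Finset.range N, A i l * B j l) =
    ∑ f ∈ SA N n, Matrix.det (Matrix.of fun i k : Fin n => A i (f k)) *
      Matrix.det (Matrix.of fun i k : Fin n => B i (f k)) := by
  classical
  have h1 : Matrix.det (Matrix.of fun i j : Fin n => ∑ l ∈ Finset.range N, A i l * B j l) =
      ∑ f ∈ Fintype.piFinset (fun _ : Fin n => Finset.range N), (∏ i, A i (f i)) *
        Matrix.det (Matrix.of fun i j : Fin n => B j (f i)) := by
    have := (Matrix.detRowAlternating (n := Fin n) (R := ℝ)).toMultilinearMap.map_sum_finset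
      (fun i l => fun j => A i l * B j l) (fun _ => Finset.range N)
    simp only [AlternatingMap.coe_multilinearMap] at this
    have e : (Matrix.of fun i j : Fin n => ∑ l ∈ Finset.range N, A i l * B j l) =
      (fun i => ∑ l ∈ Finset.range N, fun j => A i l * B j l) := by
      ext i j; simp [Finset.sum_apply]
    rw [e]
    refine this.trans (Finset.sum_congr rfl fun f _ => ?_)
    exact Matrix.det_mul_column (fun i => A i (f i)) (Matrix.of fun i j : Fin n => B j (f i))
  have h2 : ∑ f ∈ Fintype.piFinset (fun _ : Fin n => Finset.range N), (∏ i, A i (f i)) *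
        Matrix.det (Matrix.of fun i j : Fin n => B j (f i)) =
      ∑ f ∈ (Fintype.piFinset (fun _ : Fin n => Finset.range N)).filter Function.Injective,
        (∏ i, A i (f i)) * Matrix.det (Matrix.of fun i j : Fin n => B j (f i)) := by
    symm
    apply Finset.sum_subset (Finset.filter_subset _ _)
    intro f hf hf'
    have : ¬ Function.Injective f := fun h => hf' (Finset.mem_filter.2 ⟨hf, h⟩)
    simp only [Function.Injective] at this
    push Not at this
    obtain ⟨i, j, hij, hne⟩ := this
    rw [Matrix.det_zero_of_row_eq hne (by ext k; simp [hij]), mul_zero]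
  rw [h1, h2]
  have h3 : ∀ f ∈ SA N n, Matrix.det (Matrix.of fun i k : Fin n => A i (f k)) *
      Matrix.det (Matrix.of fun i k : Fin n => B i (f k)) =
      ∑ σ : Equiv.Perm (Fin n), (∏ i, A i (f (σ i))) *
        Matrix.det (Matrix.of fun i j : Fin n => B j (f (σ i))) := by
    intro f _
    rw [← Matrix.det_transpose, Matrix.det_apply', Finset.sum_mul]
    refine Finset.sum_congr rfl fun σ _ => ?_
    have := Matrix.det_permute σ (Matrix.of fun i j : Fin n => B j (f i))
    have e : (Matrix.of fun i j : Fin n => B j (f (σ i))) =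
      (Matrix.of fun i j : Fin n => B j (f i)).submatrix σ id := by ext; rfl
    rw [e, this, ← Matrix.det_transpose (Matrix.of fun i k : Fin n => B i (f k))]
    have e2 : (Matrix.of fun i k : Fin n => B i (f k)).transpose =
      (Matrix.of fun i j : Fin n => B j (f i)) := by ext; rfl
    rw [e2]
    simp only [Matrix.transpose_apply, Matrix.of_apply]
    ring
  rw [Finset.sum_congr rfl h3, ← Finset.sum_product']
  symm
  refine Finset.sum_nbij (fun q => q.1 ∘ q.2) ?_ ?_ ?_ ?_
  · rintro ⟨f, σ⟩ h
    simp only [Finset.mem_product, mem_SA, Finset.mem_univ, and_true] at h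
    simp only [Finset.mem_filter, Fintype.mem_piFinset, Finset.mem_range]
    exact ⟨fun i => h.1 _, h.2.injective.comp σ.injective⟩
  · rintro ⟨f, σ⟩ h ⟨g, τ⟩ h' he
    simp only [Finset.coe_product, Set.mem_prod, Finset.mem_coe, mem_SA] at h h'
    simp only at he
    have hfg : f = g := by
      apply strictAnti_range_eq h.1.2 h'.1.2
      rw [← σ.surjective.range_comp f, ← τ.surjective.range_comp g, he]
    subst hfg
    congr 1
    ext i
    exact congrArg _ (h.1.2.injective (congrFun he i))
  · intro f hf
    simp only [Finset.coe_filter, Set.mem_ofPred_eq, Fintype.mem_piFinset, Finset.mem_range] at hf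
    set τ : Equiv.Perm (Fin n) := Fin.revPerm.trans (Tuple.sort f) with hτ
    refine ⟨(f ∘ τ, τ⁻¹), ?_, ?_⟩
    · simp only [Finset.coe_product, Set.mem_prod, Finset.mem_coe, mem_SA, Finset.mem_univ, and_true]
      refine ⟨fun i => hf.1 _, ?_⟩
      have hm : StrictMono (f ∘ Tuple.sort f) :=
        (Tuple.monotone_sort f).strictMono_of_injective (hf.2.comp (Tuple.sort f).injective)
      exact hm.comp_strictAnti Fin.rev_strictAnti
    · ext i; simp
  · rintro ⟨f, σ⟩ _
    rfl

lemma SA_gap {n : ℕ} {f : Fin n → ℕ} (hf : StrictAnti f) (d : ℕ) (i j : Fin n)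
    (h : (i : ℕ) + d = j) : f j + d ≤ f i := by
  induction d generalizing j with
  | zero => have : i = j := Fin.ext (by simpa using h)
            simp [this]
  | succ d ih =>
    have hj := j.2
    have := ih ⟨i + d, by omega⟩ rfl
    have h2 : f j < f ⟨i + d, by omega⟩ := hf (Fin.lt_def.2 (by simp; omega))
    omega

lemma delta_det {n : ℕ} {f g : Fin n → ℕ} (hf : StrictAnti f) (hg : StrictAnti g) :
    Matrix.det (Matrix.of fun i j : Fin n => if f i = g j then (1:ℝ) else 0) =
      if f = g then 1 else 0 := by
  classical
  split_ifs with h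
  · subst h
    have : (Matrix.of fun i j : Fin n => if f i = f j then (1:ℝ) else 0) = 1 := by
      ext i j
      simp [Matrix.one_apply, hf.injective.eq_iff]
    rw [this, Matrix.det_one]
  · have : ∃ i, ∀ j, f i ≠ g j := by
      by_contra hc
      push Not at hc
      apply h
      apply strictAnti_range_eq hf hg
      have hs : Finset.univ.image f ⊆ Finset.univ.image g := by
        intro x hx
        obtain ⟨i, _, rfl⟩ := Finset.mem_image.1 hx
        obtain ⟨j, hj⟩ := hc i
        exact Finset.mem_image.2 ⟨j, Finset.mem_univ _, hj.symm⟩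
      have := Finset.eq_of_subset_of_card_le hs (by
        rw [Finset.card_image_of_injective _ hf.injective, Finset.card_image_of_injective _ hg.injective])
      have := congrArg (fun s : Finset ℕ => (s : Set ℕ)) this
      simpa using this
    obtain ⟨i, hi⟩ := this
    exact Matrix.det_eq_zero_of_row_eq_zero i (fun j => by simp [hi j])


lemma deg_lt_mul {h : Polynomial ℝ} {z : ℝ} (h0 : h ≠ 0) :
    h.degree < (h * (Polynomial.X - Polynomial.C z)).degree := by
  rw [Polynomial.degree_mul, Polynomial.degree_X_sub_C, Polynomial.degree_eq_natDegree h0]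
  exact_mod_cast Nat.lt_succ_self _


/-- expansion in the basis -/
lemma mem_span_p (p : ℕ → Polynomial ℝ) (hdeg : ∀ l, (p l).degree = l) (N : ℕ) (f : Polynomial ℝ)
    (hf : f.degree < N) : ∃ c : ℕ → ℝ, f = ∑ k ∈ Finset.range N, Polynomial.C (c k) * p k := by
  induction N generalizing f with
  | zero =>
    refine ⟨0, ?_⟩
    have : f = 0 := by
      rw [← Polynomial.degree_eq_bot]
      by_contra h
      rw [Polynomial.degree_eq_natDegree (by rintro rfl; simp at h)] at hf
      exact absurd (Nat.cast_lt.1 hf) (by omega)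
    simp [this]
  | succ N ih =>
    have hne : (p N).coeff N ≠ 0 := by
      apply Polynomial.coeff_ne_zero_of_eq_degree (hdeg N)
    set t := f.coeff N / (p N).coeff N with ht
    have hd : (f - Polynomial.C t * p N).degree < N := by
      rw [Polynomial.degree_lt_iff_coeff_zero]
      intro k hk
      rcases eq_or_lt_of_le hk with h | h
      · subst h; simp [ht, hne]
      · have h1 : f.coeff k = 0 := Polynomial.coeff_eq_zero_of_degree_lt
          (lt_of_lt_of_le hf (by exact_mod_cast h))
        have h2 : (p N).coeff k = 0 := Polynomial.coeff_eq_zero_of_degree_lt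
          (by rw [hdeg]; exact_mod_cast h)
        simp [h1, h2]
    obtain ⟨c, hc⟩ := ih _ hd
    refine ⟨fun k => if k = N then t else c k, ?_⟩
    rw [Finset.sum_range_succ]
    have : ∑ k ∈ Finset.range N, Polynomial.C (if k = N then t else c k) * p k =
        ∑ k ∈ Finset.range N, Polynomial.C (c k) * p k := by
      refine Finset.sum_congr rfl fun k hk => ?_
      rw [if_neg (Finset.mem_range.1 hk).ne]
    rw [this, ← hc]
    simp

lemma exists_functional (a b : ℝ) (w : ℝ → ℝ)
    (hw_mom : ∀ l : ℕ, IntegrableOn (fun x => x ^ l * w x) (Set.Ioo a b)) :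
    ∃ L : Polynomial ℝ →ₗ[ℝ] ℝ, ∀ f, L f = ∫ x in Set.Ioo a b, f.eval x * w x := by
  have hint : ∀ f : Polynomial ℝ, IntegrableOn (fun x => f.eval x * w x) (Set.Ioo a b) := by
    intro f
    induction f using Polynomial.induction_on' with
    | add f g hf hg =>
      refine (hf.add hg).congr (Filter.Eventually.of_forall fun x => ?_)
      simp [add_mul]
    | monomial k c =>
      refine ((hw_mom k).const_mul c).congr (Filter.Eventually.of_forall fun x => ?_)
      simp [mul_assoc]
  refine ⟨{ toFun := fun f => ∫ x in Set.Ioo a b, f.eval x * w x, map_add' := ?_, map_smul' := ?_ },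
    fun f => rfl⟩
  · intro f g
    rw [← integral_add (hint f) (hint g)]
    simp [add_mul]
  · intro c f
    simp only [Polynomial.eval_smul, smul_eq_mul, RingHom.id_apply]
    rw [← integral_const_mul]
    simp [mul_assoc]

/-- the reproducing kernel vanishes off the diagonal -/
lemma kernel_zero (L : Polynomial ℝ →ₗ[ℝ] ℝ) (p : ℕ → Polynomial ℝ) (hdeg : ∀ l, (p l).degree = l)
    (hL : ∀ l k, L (p l * p k) = if l = k then 1 else 0) (N : ℕ) (y z : ℝ) (hyz : y ≠ z)
    (hy : (p N).eval y = 0) (hz : (p N).eval z = 0) :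
    ∑ k ∈ Finset.range N, (p k).eval y * (p k).eval z = 0 := by
  have hpN : p N ≠ 0 := by
    intro h; have := hdeg N; rw [h] at this; simp at this
  have hLN : ∀ h : Polynomial ℝ, h.degree < N → L (p N * h) = 0 := by
    intro h hh
    obtain ⟨c, rfl⟩ := mem_span_p p hdeg N h hh
    rw [Finset.mul_sum, map_sum]
    refine Finset.sum_eq_zero fun k hk => ?_
    have : p N * (Polynomial.C (c k) * p k) = c k • (p N * p k) := by
      rw [Polynomial.smul_eq_C_mul]; ring
    rw [this, map_smul, hL, if_neg (Finset.mem_range.1 hk).ne']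
    simp
  obtain ⟨g, hg⟩ := Polynomial.dvd_iff_isRoot.2 hz
  have hg0 : g ≠ 0 := by rintro rfl; simp at hg; exact hpN hg
  have hgd : g.degree < N := by
    rw [← hdeg N, hg, mul_comm]
    apply deg_lt_mul hg0
  obtain ⟨c, hc⟩ := mem_span_p p hdeg N g hgd
  have hck : ∀ k < N, c k = (p k).eval z * L g := by
    intro k hk
    have h1 : L (g * p k) = c k := by
      conv_lhs => rw [hc]
      rw [Finset.sum_mul, map_sum, Finset.sum_eq_single k]
      · rw [mul_assoc, ← Polynomial.smul_eq_C_mul, map_smul, hL]; simp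
      · intro j _ hj
        rw [mul_assoc, ← Polynomial.smul_eq_C_mul, map_smul, hL, if_neg hj]; simp
      · intro h; exact absurd (Finset.mem_range.2 hk) h
    have hr : (p k - Polynomial.C ((p k).eval z)).IsRoot z := by simp
    obtain ⟨h, hh⟩ := Polynomial.dvd_iff_isRoot.2 hr
    have hhd : h.degree < N := by
      by_cases h0 : h = 0
      · rw [h0, Polynomial.degree_zero]; exact WithBot.bot_lt_coe _
      · have e1 : h.degree < (h * (Polynomial.X - Polynomial.C z)).degree :=
          deg_lt_mul h0
        rw [mul_comm, ← hh] at e1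
        refine e1.trans_le ((Polynomial.degree_sub_le _ _).trans (max_le ?_ ?_))
        · rw [hdeg]; exact_mod_cast hk.le
        · exact Polynomial.degree_C_le.trans (by exact_mod_cast Nat.zero_le N)
    have h2 : g * p k = (p k).eval z • g + p N * h := by
      rw [Polynomial.smul_eq_C_mul, hg]
      linear_combination g * hh
    rw [← h1, h2, map_add, map_smul, hLN h hhd]; simp
  have hgy : g.eval y = 0 := by
    have := congrArg (Polynomial.eval y) hg
    rw [hy] at this
    simp only [Polynomial.eval_mul, Polynomial.eval_sub, Polynomial.eval_X, Polynomial.eval_C] at this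
    rcases mul_eq_zero.1 this.symm with h | h
    · exact absurd (sub_eq_zero.1 h) hyz
    · exact h
  have hgC : ∀ t, g.eval t = L g * ∑ k ∈ Finset.range N, (p k).eval t * (p k).eval z := by
    intro t
    conv_lhs => rw [hc]
    rw [Polynomial.eval_finsetSum, Finset.mul_sum]
    refine Finset.sum_congr rfl fun k hk => ?_
    rw [hck k (Finset.mem_range.1 hk)]
    simp only [Polynomial.eval_mul, Polynomial.eval_C]
    ring
  have hLg : L g ≠ 0 := by
    intro h
    apply hg0
    apply Polynomial.funext
    intro t
    rw [hgC t, h]; simp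
  have := hgC y
  rw [hgy] at this
  exact (mul_eq_zero.1 this.symm).resolve_left hLg

lemma discrete_orth (L : Polynomial ℝ →ₗ[ℝ] ℝ) (p : ℕ → Polynomial ℝ) (hdeg : ∀ l, (p l).degree = l)
    (hL : ∀ l k, L (p l * p k) = if l = k then 1 else 0) (N : ℕ) (xr : ℕ → ℝ)
    (hmono : ∀ k l : ℕ, k < l → l < N → xr k < xr l)
    (hroot : ∀ l < N, (p N).eval (xr l) = 0) (i j : ℕ) (hi : i < N) (hj : j < N) :
    ∑ l ∈ Finset.range N, (p i).eval (xr l) * ((p j).eval (xr l) * chrW p N xr l) =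
      if i = j then 1 else 0 := by
  have hpos : ∀ l, 0 < ∑ k ∈ Finset.range N, ((p k).eval (xr l)) ^ 2 := by
    intro l
    apply Finset.sum_pos' (fun k _ => sq_nonneg _)
    refine ⟨0, Finset.mem_range.2 (by omega), ?_⟩
    have h0 := Polynomial.eq_C_of_degree_eq_zero (hdeg 0)
    have : (p 0).coeff 0 ≠ 0 := Polynomial.coeff_ne_zero_of_eq_degree (hdeg 0)
    rw [h0]
    simp only [Polynomial.eval_C]
    positivity
  set Q : Matrix (Fin N) (Fin N) ℝ := Matrix.of fun k l => (p k).eval (xr l)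
  set R : Matrix (Fin N) (Fin N) ℝ := Matrix.of fun l k => (p k).eval (xr l) * chrW p N xr l
  have hRQ : R * Q = 1 := by
    ext l l'
    rw [Matrix.mul_apply, Matrix.one_apply]
    simp only [R, Q, Matrix.of_apply]
    rw [Fin.sum_univ_eq_sum_range (fun k => (p k).eval (xr l) * chrW p N xr l * (p k).eval (xr l')) N]
    split_ifs with h
    · subst h
      have : ∀ k ∈ Finset.range N, (p k).eval (xr l) * chrW p N xr l * (p k).eval (xr l) =
        ((p k).eval (xr l)) ^ 2 * chrW p N xr l := fun k _ => by ring
      rw [Finset.sum_congr rfl this, ← Finset.sum_mul, chrW, mul_inv_cancel₀ (hpos l).ne']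
    · have hne : xr l ≠ xr l' := by
        have : (l : ℕ) ≠ l' := fun e => h (Fin.ext e)
        rcases lt_or_gt_of_ne this with e | e
        · exact (hmono _ _ e l'.2).ne
        · exact (hmono _ _ e l.2).ne'
      have hk := kernel_zero L p hdeg hL N _ _ hne (hroot l l.2) (hroot l' l'.2)
      have : ∀ k ∈ Finset.range N, (p k).eval (xr l) * chrW p N xr l * (p k).eval (xr l') =
        chrW p N xr l * ((p k).eval (xr l) * (p k).eval (xr l')) := fun k _ => by ring
      rw [Finset.sum_congr rfl this, ← Finset.mul_sum, hk, mul_zero]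
  have hQR : Q * R = 1 := mul_eq_one_comm.1 hRQ
  have := congrFun (congrFun hQR ⟨i, hi⟩) ⟨j, hj⟩
  rw [Matrix.mul_apply, Matrix.one_apply] at this
  simp only [R, Q, Matrix.of_apply, Fin.mk.injEq] at this
  rw [Fin.sum_univ_eq_sum_range
    (fun l => (p i).eval (xr l) * ((p j).eval (xr l) * chrW p N xr l)) N] at this
  exact this

lemma mem_Lam {m n : ℕ} {f : Fin n → ℕ} :
    f ∈ Lam m n ↔ (∀ i, f i ≤ m) ∧ ∀ i j : Fin n, i ≤ j → f j ≤ f i := by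
  simp [Lam, Fintype.mem_piFinset, Nat.lt_succ_iff]

/-- the shift by the staircase -/
def shiftUp (n : ℕ) (f : Fin n → ℕ) : Fin n → ℕ := fun j => f j + (n - 1 - (j : ℕ))

lemma shiftUp_inj (n : ℕ) : Function.Injective (shiftUp n) := by
  intro f g h
  funext i
  have := congrFun h i
  simp only [shiftUp] at this
  omega

lemma shiftUp_mem {m n : ℕ} {f : Fin n → ℕ} (hf : f ∈ Lam m n) : shiftUp n f ∈ SA (m + n) n := by
  rw [mem_Lam] at hf
  rw [mem_SA]
  constructor
  · intro i
    have := hf.1 i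
    have := i.2
    simp only [shiftUp]
    omega
  · intro i j hij
    have := hf.2 i j hij.le
    have h1 := Fin.lt_def.1 hij
    have := j.2
    simp only [shiftUp]
    omega

lemma shiftUp_surj {m n : ℕ} {f : Fin n → ℕ} (hf : f ∈ SA (m + n) n) :
    ∃ g ∈ Lam m n, shiftUp n g = f := by
  rw [mem_SA] at hf
  have hlow : ∀ i : Fin n, n - 1 - (i : ℕ) ≤ f i := by
    intro i
    have := i.2
    have := SA_gap hf.2 (n - 1 - i) i ⟨n - 1, by omega⟩ (by simp; omega)
    omega
  refine ⟨fun j => f j - (n - 1 - (j : ℕ)), ?_, ?_⟩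
  · rw [mem_Lam]
    constructor
    · intro i
      have hi := i.2
      have h1 := SA_gap hf.2 i ⟨0, by omega⟩ i (by simp)
      have h2 := hf.1 ⟨0, by omega⟩
      omega
    · intro i j hij
      have h1 := SA_gap hf.2 (j - i) i j (by have := Fin.le_def.1 hij; omega)
      have := Fin.le_def.1 hij
      have := j.2
      omega
  · funext j
    have := hlow j
    simp only [shiftUp]
    omega

theorem generalized_schur_extended_discrete_orthogonality
    (n : ℕ) (hn : 0 < n) (m : ℕ)
    (a b : ℝ) (hab : a < b)
    (w : ℝ → ℝ)
    (hw_cont : ContinuousOn w (Set.Ioo a b))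
    (hw_pos : ∀ x ∈ Set.Ioo a b, 0 < w x)
    (hw_mom : ∀ l : ℕ, IntegrableOn (fun x => x ^ l * w x) (Set.Ioo a b))
    -- the orthonormal polynomials for the weight w
    (p : ℕ → Polynomial ℝ)
    (hdeg : ∀ l, (p l).degree = l)
    (hlead : ∀ l, 0 < (p l).leadingCoeff)
    (horth : ∀ l k, (∫ x in Set.Ioo a b, (p l).eval x * (p k).eval x * w x)
      = if l = k then 1 else 0)
    -- the ordered roots of p_{m+n} in (a,b)
    (xr : ℕ → ℝ)
    (hxr_mem : ∀ l < m + n, xr l ∈ Set.Ioo a b)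
    (hxr_mono : ∀ k l : ℕ, k < l → l < m + n → xr k < xr l)
    (hxr_root : ∀ l < m + n, (p (m + n)).eval (xr l) = 0)
    -- the generalized Schur polynomials
    (P : (Fin n → ℕ) → (Fin n → ℝ) → ℝ)
    (hPcont : ∀ lam, Continuous (P lam))
    (hPdet : ∀ lam x, vand n x * P lam x = schurDet n p lam x) :
    -- (1) if λ ∈ Λ^{(m+1,n)} has λ_1 = m+1 then P_λ vanishes on all nodes
    (∀ lam ∈ Lam (m + 1) n, lam ⟨0, hn⟩ = m + 1 →
      ∀ lh ∈ Lam m n, P lam (node n xr lh) = 0) ∧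
    -- (2) extended discrete orthogonality
    (∀ lam ∈ Lam (m + 1) n, ∀ mu ∈ Lam m n,
      (∑ lh ∈ Lam m n,
        P lam (node n xr lh) * P mu (node n xr lh) *
          (vand n (node n xr lh) ^ 2 *
            ∏ j : Fin n, chrW p (m + n) xr (lh j + (n - 1 - (j : ℕ)))))
      = if mu = lam then 1 else 0) := by
  have hzero : ∀ lam ∈ Lam (m + 1) n, lam ⟨0, hn⟩ = m + 1 →
      ∀ lh ∈ Lam m n, P lam (node n xr lh) = 0 := by
    intro lam _ h0 lh hlh
    have hs := mem_SA.1 (shiftUp_mem hlh)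
    have hv : vand n (node n xr lh) ≠ 0 := by
      rw [vand, Finset.prod_ne_zero_iff]
      intro j _
      rw [Finset.prod_ne_zero_iff]
      intro k hk
      have hjk : j < k := (Finset.mem_filter.1 hk).2
      have := hxr_mono _ _ (hs.2 hjk) (hs.1 j)
      exact (sub_pos.2 this).ne'
    have hd := hPdet lam (node n xr lh)
    have : schurDet n p lam (node n xr lh) = 0 := by
      apply Matrix.det_eq_zero_of_row_eq_zero ⟨0, hn⟩
      intro k
      have e : lam ⟨0, hn⟩ + (n - 1 - 0) = m + n := by omega
      simp only [Matrix.of_apply, e]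
      exact hxr_root _ (hs.1 k)
    rw [this] at hd
    exact (mul_eq_zero.1 hd).resolve_left hv
  refine ⟨hzero, ?_⟩
  intro lam hlam mu hmu
  by_cases h0 : lam ⟨0, hn⟩ = m + 1
  · rw [Finset.sum_eq_zero, if_neg]
    · rintro rfl
      have := (mem_Lam.1 hmu).1 ⟨0, hn⟩
      omega
    · intro lh hlh
      rw [hzero lam hlam h0 lh hlh]
      simp
  have hlam' : lam ∈ Lam m n := by
    rw [mem_Lam] at hlam ⊢
    refine ⟨fun i => ?_, hlam.2⟩
    have h1 := hlam.2 ⟨0, hn⟩ i (Fin.le_def.2 (Nat.zero_le _))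
    have h2 := hlam.1 ⟨0, hn⟩
    omega
  obtain ⟨L, hL⟩ := exists_functional a b w hw_mom
  have hL' : ∀ l k, L (p l * p k) = if l = k then 1 else 0 := by
    intro l k
    rw [hL, ← horth l k]
    simp
  have hls := mem_SA.1 (shiftUp_mem hlam')
  have hms := mem_SA.1 (shiftUp_mem hmu)
  have hcb := cauchy_binet (m + n) n
    (fun i l => (p (shiftUp n lam i)).eval (xr l))
    (fun i l => chrW p (m + n) xr l * (p (shiftUp n mu i)).eval (xr l))
  have hdet : (Matrix.of fun i j : Fin n => ∑ l ∈ Finset.range (m + n),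
      (p (shiftUp n lam i)).eval (xr l) *
        (chrW p (m + n) xr l * (p (shiftUp n mu j)).eval (xr l))) =
      Matrix.of fun i j : Fin n => if shiftUp n lam i = shiftUp n mu j then (1:ℝ) else 0 := by
    ext i j
    simp only [Matrix.of_apply]
    rw [← discrete_orth L p hdeg hL' (m + n) xr hxr_mono hxr_root _ _ (hls.1 i) (hms.1 j)]
    exact Finset.sum_congr rfl fun l _ => by ring
  rw [hdet, delta_det hls.2 hms.2] at hcb
  have hif : (if mu = lam then (1:ℝ) else 0) =
      if shiftUp n lam = shiftUp n mu then 1 else 0 := by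
    simp only [(shiftUp_inj n).eq_iff, eq_comm]
  rw [hif, hcb]
  refine Finset.sum_nbij (shiftUp n) (fun f hf => shiftUp_mem hf) ((shiftUp_inj n).injOn) ?_ ?_
  · intro f hf
    obtain ⟨g, hg, rfl⟩ := shiftUp_surj (Finset.mem_coe.1 hf)
    exact ⟨g, Finset.mem_coe.2 hg, rfl⟩
  · intro lh _
    have e1 := hPdet lam (node n xr lh)
    have e2 := hPdet mu (node n xr lh)
    have e3 := Matrix.det_mul_row (fun k => chrW p (m + n) xr (shiftUp n lh k))
      (Matrix.of fun i k : Fin n => (p (shiftUp n mu i)).eval (xr (shiftUp n lh k)))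
    simp only [Matrix.of_apply] at e3
    rw [e3]
    change _ = schurDet n p lam (node n xr lh) * (_ * schurDet n p mu (node n xr lh))
    rw [← e1, ← e2]
    simp only [shiftUp]
    ring

end
end

section
/- Gauss–Hermite cubature for the Gaussian unitary ensemble: for every f ∈ ℙ^{(2m+1,n)}, (1/(π^{n/2} n!)) ∫_{−∞}^{∞}⋯∫_{−∞}^{∞} f(x) Π_{j=1}^n e^{−x_j²} Π_{1≤j<k≤n}(x_j−x_k)² dx_1⋯dx_n = Σ_{λ̂ ∈ Λ^{(m,n)}} f(x_λ̂^{(m,n)}) W_λ̂, where W_λ̂ = (m+n)^{−n} Π_{j=1}^n (h_{m+n−1}(x^{(m+n)}_{λ̂_j+n−j}))^{−2} · Π_{1≤j<k≤n}(x^{(m+n)}_{λ̂_j+n−j} − x^{(m+n)}_{λ̂_k+n−k})². -/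
open MeasureTheory Real Finset

noncomputable section

/-- The symmetric monomial `M_λ(x)`. -/
def msym (n : ℕ) (lam : Fin n → ℕ) : (Fin n → ℝ) → ℝ := fun x =>
  ∑ mu ∈ Finset.univ.image (fun σ : Equiv.Perm (Fin n) => lam ∘ σ), ∏ j : Fin n, x j ^ mu j

/-- The space `ℙ^{(m,n)}`: span of the symmetric monomials `M_λ`, `λ ∈ Λ^{(m,n)}`. -/
def pSpace (m n : ℕ) : Submodule ℝ ((Fin n → ℝ) → ℝ) :=
  Submodule.span ℝ (msym n '' (Lam m n : Set (Fin n → ℕ)))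

section OneD
open Polynomial

lemma integrable_pow_gauss (k : ℕ) : Integrable (fun x : ℝ => x ^ k * Real.exp (-x ^ 2)) := by
  have := integrable_rpow_mul_exp_neg_mul_sq (b := 1) one_pos (s := k)
    (by have : (0:ℝ) ≤ k := Nat.cast_nonneg k
        linarith)
  simpa using this

lemma integrable_poly_gauss (p : ℝ[X]) :
    Integrable (fun x : ℝ => p.eval x * Real.exp (-x ^ 2)) := by
  induction p using Polynomial.induction_on' with
  | add p q hp hq =>
    simp only [eval_add, add_mul]
    exact hp.add hq
  | monomial k a =>
    simp only [eval_monomial, mul_assoc]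
    exact (integrable_pow_gauss k).const_mul a

def gE : ℝ[X] →ₗ[ℝ] ℝ where
  toFun p := ∫ x : ℝ, p.eval x * Real.exp (-x ^ 2)
  map_add' p q := by
    simp only [eval_add, add_mul]
    exact integral_add (integrable_poly_gauss p) (integrable_poly_gauss q)
  map_smul' a p := by
    simp only [eval_smul, smul_eq_mul, mul_assoc, RingHom.id_apply]
    exact integral_const_mul _ _

lemma gE_apply (p : ℝ[X]) : gE p = ∫ x : ℝ, p.eval x * Real.exp (-x ^ 2) := rfl

lemma gE_C_mul (a : ℝ) (p : ℝ[X]) : gE (C a * p) = a * gE p := by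
  rw [← smul_eq_C_mul, map_smul, smul_eq_mul]

lemma gE_derivative (p : ℝ[X]) : gE (derivative p) = 2 * gE (X * p) := by
  have h1 : ∀ x : ℝ, HasDerivAt (fun x : ℝ => p.eval x * Real.exp (-x ^ 2))
      ((derivative p - C 2 * (X * p)).eval x * Real.exp (-x ^ 2)) x := by
    intro x
    have h2 : HasDerivAt (fun x : ℝ => Real.exp (-x ^ 2)) (Real.exp (-x^2) * (-(2 * x))) x := by
      have := ((hasDerivAt_pow 2 x).neg).exp
      simpa using this
    refine ((p.hasDerivAt x).mul h2).congr_deriv ?_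
    simp only [eval_sub, eval_mul, eval_C, eval_X]
    ring
  have h3 := integral_eq_zero_of_hasDerivAt_of_integrable h1 (integrable_poly_gauss _)
    (integrable_poly_gauss _)
  rw [← gE_apply, map_sub, gE_C_mul] at h3
  linarith

variable {h : ℕ → ℝ[X]}

lemma gE_low
    (hdeg : ∀ l, (h l).degree = l)
    (horth : ∀ l k, gE (h l * h k) = if l = k then Real.sqrt π else 0)
    (l d : ℕ) (hd : d ≤ l) : ∀ q : ℝ[X], q.degree < d → gE (h l * q) = 0 := by
  induction d with
  | zero =>
    intro q hq
    have : q = 0 := by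
      rw [← degree_eq_bot]; simpa using hq
    simp [this]
  | succ d ih =>
    intro q hq
    have hc : (h d).coeff d ≠ 0 := by
      have := hdeg d
      exact coeff_ne_zero_of_eq_degree this
    have e := ih (by omega) (q - C (q.coeff d / (h d).coeff d) * h d) (by
      rw [degree_lt_iff_coeff_zero] at hq ⊢
      intro k hk
      rcases hk.eq_or_lt with rfl | hk
      · simp [hc]
      · have : (h d).coeff k = 0 := coeff_eq_zero_of_degree_lt (by rw [hdeg]; exact_mod_cast hk)
        simp [hq k hk, this])
    rw [mul_sub, map_sub, mul_left_comm, gE_C_mul, horth, if_neg (by omega)] at e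
    linarith

lemma gE_lead
    (hdeg : ∀ l, (h l).degree = l)
    (horth : ∀ l k, gE (h l * h k) = if l = k then Real.sqrt π else 0)
    (l : ℕ) (q : ℝ[X]) (hq : q.degree < (l + 1 : ℕ)) :
    gE (h l * q) = q.coeff l / (h l).coeff l * Real.sqrt π := by
  have hc : (h l).coeff l ≠ 0 := coeff_ne_zero_of_eq_degree (hdeg l)
  have e := gE_low hdeg horth l l le_rfl (q - C (q.coeff l / (h l).coeff l) * h l) (by
      rw [degree_lt_iff_coeff_zero] at hq ⊢
      intro k hk
      rcases hk.eq_or_lt with rfl | hk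
      · simp [hc]
      · have : (h l).coeff k = 0 := coeff_eq_zero_of_degree_lt (by rw [hdeg]; exact_mod_cast hk)
        simp [hq k hk, this])
  rw [mul_sub, map_sub, mul_left_comm, gE_C_mul, horth, if_pos rfl] at e
  linarith

/-- The derivative of h (M+1) is a multiple of h M. -/
lemma derivative_h
    (hdeg : ∀ l, (h l).degree = l)
    (horth : ∀ l k, gE (h l * h k) = if l = k then Real.sqrt π else 0) (M : ℕ) :
    derivative (h (M + 1)) = C ((M + 1) * (h (M+1)).coeff (M+1) / (h M).coeff M) * h M := by
  have hc : (h M).coeff M ≠ 0 := coeff_ne_zero_of_eq_degree (hdeg M)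
  set c := ((M + 1) * (h (M+1)).coeff (M+1) / (h M).coeff M) with hcdef
  rw [← sub_eq_zero]
  set r := derivative (h (M + 1)) - C c * h M with hr
  have hrd : r.degree < M := by
    rw [degree_lt_iff_coeff_zero]
    intro k hk
    rcases hk.eq_or_lt with rfl | hk
    · simp only [hr, coeff_sub, coeff_derivative, coeff_C_mul, hcdef]
      field_simp
      ring
    · have h1 : (h M).coeff k = 0 := coeff_eq_zero_of_degree_lt (by rw [hdeg]; exact_mod_cast hk)
      have h2 : (h (M+1)).coeff (k+1) = 0 :=
        coeff_eq_zero_of_degree_lt (by rw [hdeg]; exact_mod_cast (by omega))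
      simp [hr, coeff_derivative, h1, h2]
  by_contra hne
  have hrn : r.degree = r.natDegree := degree_eq_natDegree hne
  have hdM : r.natDegree < M := by rw [hrn] at hrd; exact_mod_cast hrd
  set d := r.natDegree with hd
  have hcd : (h d).coeff d ≠ 0 := coeff_ne_zero_of_eq_degree (hdeg d)
  have e1 := gE_lead hdeg horth d r (by rw [hrn]; exact_mod_cast Nat.lt_succ_self d)
  have e2 : gE (h d * r) = 0 := by
    have e3 : h d * r = derivative (h (M+1) * h d) - h (M+1) * derivative (h d)
        - C c * (h d * h M) := by
      rw [hr, derivative_mul]; ring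
    rw [e3, map_sub, map_sub, gE_derivative, gE_C_mul, horth, if_neg (by omega),
      mul_left_comm, gE_low hdeg horth (M+1) (M+1) le_rfl, gE_low hdeg horth (M+1) (M+1) le_rfl]
    · simp
    · refine (degree_derivative_le).trans_lt ?_
      rw [hdeg]; exact_mod_cast (by omega)
    · rw [degree_mul, hdeg, degree_X]
      exact_mod_cast (by omega)
  rw [e2] at e1
  have : r.coeff d ≠ 0 := by
    rw [hd, coeff_natDegree]; exact leadingCoeff_ne_zero.mpr hne
  have hpi : Real.sqrt π ≠ 0 := (Real.sqrt_pos.mpr Real.pi_pos).ne'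
  have := mul_ne_zero (div_ne_zero this hcd) hpi
  exact this e1.symm

lemma gauss_quad
    (hdeg : ∀ l, (h l).degree = l)
    (horth : ∀ l k, gE (h l * h k) = if l = k then Real.sqrt π else 0) (M : ℕ)
    (xr : ℕ → ℝ)
    (hinj : Set.InjOn xr (Finset.range (M + 1)))
    (hroot : ∀ l < M + 1, (h (M + 1)).eval (xr l) = 0)
    (p : ℝ[X]) (hp : p.degree < (2 * (M + 1) : ℕ)) :
    gE p = ∑ i ∈ Finset.range (M + 1), p.eval (xr i) *
      (Real.sqrt π * (((M : ℝ) + 1) * (h M).eval (xr i) ^ 2)⁻¹) := by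
  have hN0 : h (M + 1) ≠ 0 := by
    intro h0; have := hdeg (M+1); rw [h0, degree_zero] at this; exact WithBot.bot_ne_coe this
  have key : ∀ p : ℝ[X], p.degree < (2 * (M + 1) : ℕ) →
      gE p = ∑ i ∈ Finset.range (M + 1), p.eval (xr i) *
        gE (Lagrange.basis (Finset.range (M + 1)) xr i) := by
    intro p hp
    have hdm := EuclideanDomain.div_add_mod p (h (M + 1))
    have hmod : (p % h (M+1)).degree < ((M + 1 : ℕ) : WithBot ℕ) := by
      have := degree_mod_lt p hN0; rwa [hdeg] at this
    have hq : (p / h (M+1)).degree < ((M + 1 : ℕ) : WithBot ℕ) := by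
      by_cases hz : p / h (M+1) = 0
      · rw [hz, degree_zero]; exact WithBot.bot_lt_coe _
      have h1 : (h (M+1) * (p / h (M+1))).degree < (2 * (M + 1) : ℕ) := by
        have : h (M+1) * (p / h (M+1)) = p - p % h (M+1) := by
          rw [eq_sub_iff_add_eq]; exact hdm
        rw [this]
        refine (degree_sub_le _ _).trans_lt (max_lt hp (hmod.trans ?_))
        exact_mod_cast (by omega)
      rw [degree_mul, hdeg, degree_eq_natDegree hz] at h1
      rw [degree_eq_natDegree hz]
      have h1' : (M + 1) + (p / h (M+1)).natDegree < 2 * (M+1) := by exact_mod_cast h1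
      exact_mod_cast (by omega)
    have hev : ∀ i ∈ Finset.range (M+1), p.eval (xr i) = (p % h (M+1)).eval (xr i) := by
      intro i hi
      conv_lhs => rw [← hdm]
      simp [hroot i (Finset.mem_range.mp hi)]
    have hint := Lagrange.eq_interpolate (s := Finset.range (M+1)) (v := xr) (f := p % h (M+1))
      hinj (by simpa using hmod)
    conv_lhs => rw [← hdm, map_add, gE_low hdeg horth (M+1) (M+1) le_rfl _ hq, hint, zero_add,
      Lagrange.interpolate_apply, map_sum]
    refine Finset.sum_congr rfl fun i hi => ?_
    rw [gE_C_mul, hev i hi]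
  rw [key p hp]
  refine Finset.sum_congr rfl fun i hi => ?_
  congr 1
  set w := gE (Lagrange.basis (Finset.range (M + 1)) xr i)
  have hcM : (h M).coeff M ≠ 0 := coeff_ne_zero_of_eq_degree (hdeg M)
  have hcN : (h (M+1)).coeff (M+1) ≠ 0 := coeff_ne_zero_of_eq_degree (hdeg (M+1))
  obtain ⟨D, hD⟩ : (X - C (xr i)) ∣ h (M+1) := dvd_iff_isRoot.mpr (hroot i (Finset.mem_range.mp hi))
  have hDdeg : D.degree = M := by
    have h1 := hdeg (M+1)
    have hD0 : D ≠ 0 := by rintro rfl; exact hN0 (by simpa using hD)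
    rw [hD, degree_mul, degree_X_sub_C, degree_eq_natDegree hD0] at h1
    rw [degree_eq_natDegree hD0]
    have h2 : 1 + D.natDegree = M + 1 := by exact_mod_cast h1
    exact_mod_cast (by omega)
  have hDc : D.coeff M = (h (M+1)).coeff (M+1) := by
    have : D.coeff (M+1) = 0 := coeff_eq_zero_of_degree_lt (by
      rw [hDdeg]; exact_mod_cast Nat.lt_succ_self M)
    rw [hD, sub_mul, coeff_sub, coeff_X_mul, coeff_C_mul, this]; simp
  have hDev : D.eval (xr i) = (derivative (h (M+1))).eval (xr i) := by
    rw [hD]; simp [derivative_mul]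
  have e1 := gE_lead hdeg horth M D (by rw [hDdeg]; exact_mod_cast Nat.lt_succ_self M)
  have e2 := key (h M * D) (by
    rw [degree_mul, hdeg, hDdeg]; exact_mod_cast (by omega))
  rw [Finset.sum_eq_single i, e1, hDc, eval_mul, hDev, derivative_h hdeg horth] at e2
  · rw [eval_mul, eval_C] at e2
    change _ = _ * w at e2
    have hpi : Real.sqrt π ≠ 0 := (Real.sqrt_pos.mpr Real.pi_pos).ne'
    have hM1 : (M : ℝ) + 1 ≠ 0 := by positivity
    have hne : (h M).eval (xr i) ≠ 0 := by
      intro h0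
      rw [h0] at e2
      simp [hcM, hcN, hpi] at e2
    field_simp at e2 ⊢
    linarith
  · intro k hk hki
    have h1 := hroot k (Finset.mem_range.mp hk)
    rw [hD, eval_mul] at h1
    have : (X - C (xr i)).eval (xr k) ≠ 0 := by
      simp only [eval_sub, eval_X, eval_C, ne_eq, sub_eq_zero]
      exact fun hx => hki (hinj hk hi hx)
    have h2 := (mul_eq_zero.mp h1).resolve_left this
    simp [h2]
  · intro h; exact absurd hi h

end OneD

section MultiD

lemma shift_strictAnti {m n : ℕ} {lam : Fin n → ℕ} (hl : lam ∈ Lam m n) :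
    StrictAnti (fun j : Fin n => lam j + (n - 1 - (j : ℕ))) := by
  intro i j hij
  have h1 := (Finset.mem_filter.mp hl).2 i j hij.le
  have h2 : (i : ℕ) < j := hij
  have h3 := j.isLt
  simp only
  omega

lemma exists_lam {m n : ℕ} (k : Fin n → ℕ) (hk : StrictAnti k) (hb : ∀ j, k j < m + n) :
    ∃ lam ∈ Lam m n, k = fun j : Fin n => lam j + (n - 1 - (j : ℕ)) := by
  -- entries drop by at least one at every step
  have key : ∀ d : ℕ, ∀ i j : Fin n, (j : ℕ) = i + d → k j + d ≤ k i := by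
    intro d
    induction d with
    | zero => intro i j hij; have : i = j := Fin.ext (by omega); simp [this]
    | succ d ih =>
      intro i j hij
      have hj := j.isLt
      have h1 := ih i ⟨i + d, by omega⟩ rfl
      have h2 : k j < k ⟨i + d, by omega⟩ := hk (by
        rw [Fin.lt_def]; simp only; omega)
      omega
  have lower : ∀ j : Fin n, n - 1 - (j : ℕ) ≤ k j := by
    intro j
    have hj := j.isLt
    have := key (n - 1 - j) j ⟨n - 1, by omega⟩ (by simp only; omega)
    omega
  refine ⟨fun j => k j - (n - 1 - (j : ℕ)), ?_, ?_⟩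
  · refine Finset.mem_filter.mpr ⟨Fintype.mem_piFinset.mpr fun j => Finset.mem_range.mpr ?_, ?_⟩
    · have hj := j.isLt
      have h0 := key j ⟨0, by omega⟩ j (by simp)
      have h1 := hb ⟨0, by omega⟩
      omega
    · intro i j hij
      have hij' : (i : ℕ) ≤ j := hij
      have hj := j.isLt
      have h0 := key (j - i) i j (by omega)
      have := lower i
      have := lower j
      simp only
      omega
  · funext j
    have := lower j
    simp only
    omega

lemma sum_symm (m n : ℕ) (G : (Fin n → ℕ) → ℝ)
    (hs : ∀ (k : Fin n → ℕ) (σ : Equiv.Perm (Fin n)), G (k ∘ σ) = G k)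
    (h0 : ∀ k : Fin n → ℕ, ¬ Function.Injective k → G k = 0) :
    ∑ k ∈ Fintype.piFinset (fun _ : Fin n => Finset.range (m + n)), G k
      = n.factorial * ∑ lam ∈ Lam m n, G (fun j => lam j + (n - 1 - (j : ℕ))) := by
  classical
  have e1 : (n.factorial : ℝ) * ∑ lam ∈ Lam m n, G (fun j => lam j + (n - 1 - (j : ℕ)))
      = ∑ p ∈ Lam m n ×ˢ (Finset.univ : Finset (Equiv.Perm (Fin n))),
          G ((fun j => p.1 j + (n - 1 - (j : ℕ))) ∘ p.2) := by
    rw [Finset.sum_product, Finset.mul_sum]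
    refine Finset.sum_congr rfl fun lam _ => ?_
    simp only [hs, Finset.sum_const, Finset.card_univ, Fintype.card_perm, Fintype.card_fin,
      nsmul_eq_mul]
  rw [e1, ← Finset.sum_filter_of_ne (p := fun k => Function.Injective k)
    (fun k _ hk => by by_contra hh; exact hk (h0 k hh))]
  symm
  refine Finset.sum_bij (fun p _ => (fun j => p.1 j + (n - 1 - (j : ℕ))) ∘ p.2) ?_ ?_ ?_ ?_
  · rintro ⟨lam, σ⟩ hp
    have hl := (Finset.mem_product.mp hp).1
    refine Finset.mem_filter.mpr ⟨Fintype.mem_piFinset.mpr fun j => Finset.mem_range.mpr ?_, ?_⟩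
    · have h1 := Finset.mem_range.mp (Fintype.mem_piFinset.mp (Finset.mem_filter.mp hl).1 (σ j))
      have h2 := (σ j).isLt
      simp only [Function.comp] at h1 ⊢
      omega
    · exact (shift_strictAnti hl).injective.comp σ.injective
  · rintro ⟨lam, σ⟩ hp ⟨lam', σ'⟩ hp' heq
    have hl := shift_strictAnti (Finset.mem_product.mp hp).1
    have hl' := shift_strictAnti (Finset.mem_product.mp hp').1
    simp only at heq hl hl'
    have hr : Set.range (fun j : Fin n => lam j + (n - 1 - (j : ℕ)))
        = Set.range (fun j : Fin n => lam' j + (n - 1 - (j : ℕ))) := by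
      rw [← σ.surjective.range_comp, heq, σ'.surjective.range_comp]
    have hk : (fun j : Fin n => lam j + (n - 1 - (j : ℕ)))
        = (fun j : Fin n => lam' j + (n - 1 - (j : ℕ))) := by
      have := (StrictMono.range_inj hl.dual_right hl'.dual_right).mp (by
        rw [Set.range_comp, Set.range_comp, hr])
      funext j
      exact congrFun this j
    have hlam : lam = lam' := by
      funext j
      have h1 := congrFun hk j
      have h2 : lam j + (n - 1 - (j : ℕ)) = lam' j + (n - 1 - (j : ℕ)) := h1
      omega
    subst hlam
    have hσ : σ = σ' := by
      ext1 j
      exact hl.injective (congrFun heq j)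
    rw [hσ]
  · intro k hk
    obtain ⟨hk1, hk2⟩ := Finset.mem_filter.mp hk
    set τ : Equiv.Perm (Fin n) := Fin.revPerm.trans (Tuple.sort k)
    have hanti : StrictAnti (k ∘ τ) := by
      have hm : StrictMono (k ∘ Tuple.sort k) :=
        (Tuple.monotone_sort k).strictMono_of_injective (hk2.comp (Tuple.sort k).injective)
      intro i j hij
      exact hm (Fin.rev_lt_rev.mpr hij)
    obtain ⟨lam, hl, he⟩ := exists_lam (m := m) (k ∘ τ) hanti
      (fun j => Finset.mem_range.mp (Fintype.mem_piFinset.mp hk1 _))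
    refine ⟨(lam, τ.symm), Finset.mem_product.mpr ⟨hl, Finset.mem_univ _⟩, ?_⟩
    simp only
    rw [← he]
    funext j
    simp
  · intro p _
    rfl

lemma vand_eq_det_sq (n : ℕ) (x : Fin n → ℝ) :
    vand n x ^ 2 = (Matrix.vandermonde x).det ^ 2 := by
  rw [Matrix.det_vandermonde, vand, ← Finset.prod_pow, ← Finset.prod_pow]
  refine Finset.prod_congr rfl fun i _ => ?_
  rw [← Finset.prod_pow, ← Finset.prod_pow]
  refine Finset.prod_congr ?_ fun j _ => by ring
  ext j; simp

lemma vand_sq_perm (n : ℕ) (x : Fin n → ℝ) (σ : Equiv.Perm (Fin n)) :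
    vand n (x ∘ σ) ^ 2 = vand n x ^ 2 := by
  rw [vand_eq_det_sq, vand_eq_det_sq]
  have : Matrix.vandermonde (x ∘ σ) = (Matrix.vandermonde x).submatrix σ id := by
    ext i j; simp [Matrix.vandermonde_apply]
  rw [this, Matrix.det_permute, mul_pow]
  rcases Int.units_eq_one_or (Equiv.Perm.sign σ) with h | h <;> simp [h]

lemma vand_sq_zero (n : ℕ) (x : Fin n → ℝ) (hx : ¬ Function.Injective x) :
    vand n x ^ 2 = 0 := by
  rw [vand_eq_det_sq]
  have : (Matrix.vandermonde x).det = 0 := by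
    by_contra h
    exact hx (Matrix.det_vandermonde_ne_zero_iff.mp h)
  simp [this]

lemma vand_sq_expand (n : ℕ) (x : Fin n → ℝ) :
    vand n x ^ 2 = ∑ σ : Equiv.Perm (Fin n), ∑ τ : Equiv.Perm (Fin n),
      ((Equiv.Perm.sign σ : ℤ) : ℝ) * ((Equiv.Perm.sign τ : ℤ) : ℝ) *
        ∏ j, x j ^ ((σ j : ℕ) + (τ j : ℕ)) := by
  have h : (Matrix.vandermonde x).det = ∑ σ : Equiv.Perm (Fin n),
      ((Equiv.Perm.sign σ : ℤ) : ℝ) * ∏ j, x j ^ (σ j : ℕ) := by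
    rw [← Matrix.det_transpose, Matrix.det_apply']
    rfl
  rw [vand_eq_det_sq, h, sq, Finset.sum_mul_sum]
  refine Finset.sum_congr rfl fun σ _ => Finset.sum_congr rfl fun τ _ => ?_
  simp only [pow_add, Finset.prod_mul_distrib]
  ring

def monoSpace (K n : ℕ) : Submodule ℝ ((Fin n → ℝ) → ℝ) :=
  Submodule.span ℝ {g | ∃ mu : Fin n → ℕ, (∀ j, mu j < K) ∧ g = fun x => ∏ j, x j ^ mu j}

lemma mul_vand_mem (m n : ℕ) (hn : 0 < n) (f : (Fin n → ℝ) → ℝ)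
    (hf : f ∈ pSpace (2 * m + 1) n) :
    (fun x => f x * vand n x ^ 2) ∈ monoSpace (2 * (m + n)) n := by
  induction hf using Submodule.span_induction with
  | mem f hf =>
    obtain ⟨lam, hl, rfl⟩ := hf
    have : (fun x => msym n lam x * vand n x ^ 2) =
        ∑ mu ∈ Finset.univ.image (fun σ : Equiv.Perm (Fin n) => lam ∘ σ),
        ∑ σ : Equiv.Perm (Fin n), ∑ τ : Equiv.Perm (Fin n),
        (((Equiv.Perm.sign σ : ℤ) : ℝ) * ((Equiv.Perm.sign τ : ℤ) : ℝ)) •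
          (fun x : Fin n → ℝ => ∏ j, x j ^ (mu j + ((σ j : ℕ) + (τ j : ℕ)))) := by
      funext x
      simp only [msym, vand_sq_expand, Finset.sum_apply, Pi.smul_apply, smul_eq_mul]
      rw [Finset.sum_mul]
      refine Finset.sum_congr rfl fun mu _ => ?_
      rw [Finset.mul_sum]
      refine Finset.sum_congr rfl fun σ _ => ?_
      rw [Finset.mul_sum]
      refine Finset.sum_congr rfl fun τ _ => ?_
      simp only [pow_add, Finset.prod_mul_distrib]
      ring
    rw [this]
    refine Submodule.sum_mem _ fun mu hmu => ?_
    refine Submodule.sum_mem _ fun σ _ => ?_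
    refine Submodule.sum_mem _ fun τ _ => ?_
    refine Submodule.smul_mem _ _ (Submodule.subset_span ⟨_, ?_, rfl⟩)
    intro j
    obtain ⟨ρ, _, rfl⟩ := Finset.mem_image.mp hmu
    have h1 := Finset.mem_range.mp (Fintype.mem_piFinset.mp (Finset.mem_filter.mp hl).1 (ρ j))
    have h2 := (σ j).isLt
    have h3 := (τ j).isLt
    simp only [Function.comp]
    omega
  | zero =>
    convert Submodule.zero_mem (monoSpace (2 * (m + n)) n) using 1
    funext x; simp
  | add f g _ _ hf hg =>
    have := Submodule.add_mem _ hf hg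
    convert this using 1
    funext x; simp [add_mul]
  | smul a f _ hf =>
    have := Submodule.smul_mem _ a hf
    convert this using 1
    funext x; simp [mul_assoc]

lemma pSpace_symm (K n : ℕ) (f : (Fin n → ℝ) → ℝ) (hf : f ∈ pSpace K n)
    (x : Fin n → ℝ) (σ : Equiv.Perm (Fin n)) : f (x ∘ σ) = f x := by
  induction hf using Submodule.span_induction with
  | mem f hf =>
    obtain ⟨lam, hl, rfl⟩ := hf
    unfold msym
    refine Finset.sum_nbij' (fun mu => mu ∘ σ.symm) (fun mu => mu ∘ σ) ?_ ?_ ?_ ?_ ?_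
    · intro mu hmu
      obtain ⟨ρ, _, rfl⟩ := Finset.mem_image.mp hmu
      exact Finset.mem_image.mpr ⟨σ.symm.trans ρ, Finset.mem_univ _, rfl⟩
    · intro mu hmu
      obtain ⟨ρ, _, rfl⟩ := Finset.mem_image.mp hmu
      exact Finset.mem_image.mpr ⟨σ.trans ρ, Finset.mem_univ _, rfl⟩
    · intro mu _; funext j; simp
    · intro mu _; funext j; simp
    · intro mu _
      rw [← Equiv.prod_comp σ (fun j => x j ^ (mu ∘ σ.symm) j)]
      simp
  | zero => rfl
  | add f g _ _ hf hg => simp [hf, hg]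
  | smul a f _ hf => simp [hf]

lemma cubature_mono (K n N : ℕ) (xr w : ℕ → ℝ)
    (hq : ∀ k < K, ∫ x : ℝ, x ^ k * Real.exp (-x ^ 2) = ∑ i ∈ Finset.range N, xr i ^ k * w i)
    (g : (Fin n → ℝ) → ℝ) (hg : g ∈ monoSpace K n) :
    Integrable (fun x : Fin n → ℝ => g x * ∏ j, Real.exp (-(x j) ^ 2)) ∧
    ∫ x : Fin n → ℝ, g x * ∏ j, Real.exp (-(x j) ^ 2) =
      ∑ k ∈ Fintype.piFinset (fun _ : Fin n => Finset.range N),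
        g (fun j => xr (k j)) * ∏ j, w (k j) := by
  induction hg using Submodule.span_induction with
  | mem g hg =>
    obtain ⟨mu, hmu, rfl⟩ := hg
    simp only [← Finset.prod_mul_distrib]
    refine ⟨?_, ?_⟩
    · exact Integrable.fintype_prod (f := fun j (y : ℝ) => y ^ mu j * Real.exp (-y ^ 2))
        (μ := fun _ => volume) fun j => integrable_pow_gauss (mu j)
    · rw [integral_fintype_prod_volume_eq_prod (fun j (y : ℝ) => y ^ mu j * Real.exp (-y ^ 2)),
        Finset.prod_congr rfl (fun j _ => hq (mu j) (hmu j)), Finset.prod_univ_sum]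
  | zero => simp
  | add f g _ _ hf hg =>
    simp only [Pi.add_apply, add_mul]
    refine ⟨hf.1.add hg.1, ?_⟩
    rw [integral_add hf.1 hg.1, hf.2, hg.2, Finset.sum_add_distrib]
  | smul a f _ hf =>
    simp only [Pi.smul_apply, smul_eq_mul, mul_assoc]
    refine ⟨hf.1.const_mul a, ?_⟩
    rw [integral_const_mul, hf.2, Finset.mul_sum]

end MultiD

theorem gauss_hermite_cubature_GUE
    (n : ℕ) (hn : 0 < n) (m : ℕ)
    -- the normalized Hermite polynomials: orthonormal w.r.t. π^{-1/2} e^{-x²} on ℝ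
    (h : ℕ → Polynomial ℝ)
    (hdeg : ∀ l, (h l).degree = l)
    (hlead : ∀ l, 0 < (h l).leadingCoeff)
    (horth : ∀ l k, (∫ x : ℝ, (h l).eval x * (h k).eval x * (Real.exp (-x ^ 2) / Real.sqrt π))
      = if l = k then 1 else 0)
    -- the ordered roots of h_{m+n}
    (xr : ℕ → ℝ)
    (hxr_mono : ∀ k l : ℕ, k < l → l < m + n → xr k < xr l)
    (hxr_root : ∀ l < m + n, (h (m + n)).eval (xr l) = 0)
    -- a symmetric polynomial of degree at most 2m+1 in each variable
    (f : (Fin n → ℝ) → ℝ)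
    (hf : f ∈ pSpace (2 * m + 1) n) :
    (1 / (Real.sqrt π ^ n * n.factorial)) *
      (∫ x : Fin n → ℝ, f x * (∏ j, Real.exp (-(x j) ^ 2)) * vand n x ^ 2)
    = ∑ lh ∈ Lam m n,
        f (node n xr lh) *
          ((((m : ℝ) + n) ^ n)⁻¹ *
            (∏ j : Fin n, (((h (m + n - 1)).eval (xr (lh j + (n - 1 - (j : ℕ))))) ^ 2)⁻¹) *
            vand n (node n xr lh) ^ 2) := by
  obtain ⟨M, hM⟩ : ∃ M, m + n = M + 1 := ⟨m + n - 1, by omega⟩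
  have hpi : Real.sqrt π ≠ 0 := (Real.sqrt_pos.mpr Real.pi_pos).ne'
  have horth' : ∀ l k, gE (h l * h k) = if l = k then Real.sqrt π else 0 := by
    intro l k
    have h1 : gE (h l * h k) = Real.sqrt π *
        ∫ x : ℝ, (h l).eval x * (h k).eval x * (Real.exp (-x ^ 2) / Real.sqrt π) := by
      rw [gE_apply, ← integral_const_mul]
      congr 1
      funext x
      rw [Polynomial.eval_mul]
      field_simp
    rw [h1, horth]
    split_ifs <;> simp
  have hinj : Set.InjOn xr (Finset.range (M + 1)) := by
    intro a ha b hb hab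
    have ha' := Finset.mem_range.mp ha
    have hb' := Finset.mem_range.mp hb
    rcases lt_trichotomy a b with hlt | heq | hlt
    · exact absurd hab (hxr_mono a b hlt (by omega)).ne
    · exact heq
    · exact absurd hab (hxr_mono b a hlt (by omega)).ne'
  have hroot : ∀ l < M + 1, (h (M + 1)).eval (xr l) = 0 := by
    rw [← hM]; exact hxr_root
  set w : ℕ → ℝ := fun i => Real.sqrt π * (((M : ℝ) + 1) * (h M).eval (xr i) ^ 2)⁻¹ with hw
  have hq : ∀ k < 2 * (m + n), ∫ x : ℝ, x ^ k * Real.exp (-x ^ 2)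
      = ∑ i ∈ Finset.range (m + n), xr i ^ k * w i := by
    intro k hk
    have := gauss_quad hdeg horth' M xr hinj hroot (Polynomial.X ^ k) (by
      rw [Polynomial.degree_X_pow, ← hM]; exact_mod_cast hk)
    rw [hM]
    simpa only [gE_apply, Polynomial.eval_pow, Polynomial.eval_X] using this
  have hcub := (cubature_mono (2 * (m + n)) n (m + n) xr w hq _ (mul_vand_mem m n hn f hf)).2
  have hsym := sum_symm m n (fun k => f (fun j => xr (k j)) * vand n (fun j => xr (k j)) ^ 2 *
    ∏ j, w (k j)) (by
      intro k σ
      have e1 := pSpace_symm _ n f hf (fun j => xr (k j)) σ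
      have e2 := vand_sq_perm n (fun j => xr (k j)) σ
      have e3 := Equiv.prod_comp σ (fun j => w (k j))
      simp only [Function.comp_def] at e1 e2 ⊢
      rw [e1, e2, e3]) (by
      intro k hk
      rw [vand_sq_zero n _ (fun hi => hk (fun a b hab => hi (by simp [hab])))]
      simp)
  have hint : (∫ x : Fin n → ℝ, f x * (∏ j, Real.exp (-(x j) ^ 2)) * vand n x ^ 2)
      = ∫ x : Fin n → ℝ, f x * vand n x ^ 2 * ∏ j, Real.exp (-(x j) ^ 2) := by
    congr 1
    funext x
    ring
  have hfac : (n.factorial : ℝ) ≠ 0 := by exact_mod_cast n.factorial_ne_zero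
  rw [hint, hcub, hsym, Finset.mul_sum, Finset.mul_sum]
  refine Finset.sum_congr rfl fun lh _ => ?_
  have hM' : m + n - 1 = M := by omega
  have hmn : (m : ℝ) + n = (M : ℝ) + 1 := by exact_mod_cast hM
  have hprod : ∏ j : Fin n, w (lh j + (n - 1 - (j : ℕ))) =
      Real.sqrt π ^ n * ((((M : ℝ) + 1) ^ n)⁻¹ *
        ∏ j : Fin n, (((h M).eval (xr (lh j + (n - 1 - (j : ℕ))))) ^ 2)⁻¹) := by
    simp only [hw, mul_inv, Finset.prod_mul_distrib, Finset.prod_const, Finset.card_univ,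
      Fintype.card_fin, inv_pow]
  rw [hprod, hM', hmn]
  unfold node
  field_simp

end
end
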